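/- Let X and Y be disjoint subsets of the node set V of a DAG D such that Y ⊆ de(X,D). Then O(X,Y,D) = pa(Y, D^{XY}) \ (X ∪ Y); that is, the O-set pa(cn(X,Y,D),D) \ forb(X,Y,D) equals the set of parents of Y in the forbidden projection D^{XY}, excluding the nodes of X and Y. -/

import Mathlib

/-! Framework for causal graphs: mixed graphs (directed, undirected, bi-directed edges),
paths as lists of typed steps, (possibly) directed paths, descendants, causal nodes,
forbidden sets, (definite-status) blocking, valid adjustment sets, Meek's rules,
maxPDAGs, latent/forbidden projections, d-separation. -/

namespace Causal

universe u

variable {V : Type u}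

/-- A mixed graph with directed, undirected and bi-directed edge relations. -/
structure MixedGraph (V : Type u) where
  dir : V → V → Prop
  undir : V → V → Prop
  bidir : V → V → Prop

/-- The kind of an edge as traversed along a path: forward directed (`a → b`),
backward directed (`a ← b`), undirected (`a − b`), or bi-directed (`a ↔ b`). -/
inductive EdgeKind : Type
  | fwd | bwd | und | bid
  deriving DecidableEq

/-- A step of a path: source node, kind of traversed edge, destination node. -/
abbrev Step (V : Type u) := V × EdgeKind × V

namespace Step
def src (s : Step V) : V := s.1
def kind (s : Step V) : EdgeKind := s.2.1
def dst (s : Step V) : V := s.2.2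
end Step

/-- The step `s` traverses an actual edge of `G`. Undirected and bi-directed
edge relations are used symmetrically. -/
def stepOK (G : MixedGraph V) (s : Step V) : Prop :=
  match Step.kind s with
  | EdgeKind.fwd => G.dir (Step.src s) (Step.dst s)
  | EdgeKind.bwd => G.dir (Step.dst s) (Step.src s)
  | EdgeKind.und => G.undir (Step.src s) (Step.dst s) ∨ G.undir (Step.dst s) (Step.src s)
  | EdgeKind.bid => G.bidir (Step.src s) (Step.dst s) ∨ G.bidir (Step.dst s) (Step.src s)

/-- The sequence of nodes visited by a list of steps. -/
def pathNodes : List (Step V) → List V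
  | [] => []
  | s :: rest => Step.src s :: (s :: rest).map Step.dst

/-- `p` is a path in `G`: a nonempty chain of valid steps visiting distinct nodes. -/
structure IsPath (G : MixedGraph V) (p : List (Step V)) : Prop where
  nonempty : p ≠ []
  valid : ∀ s ∈ p, stepOK G s
  chain : p.Chain' (fun s t => Step.dst s = Step.src t)
  nodup : (pathNodes p).Nodup

/-- The path starts at node `a`. -/
def startsAt (p : List (Step V)) (a : V) : Prop := (pathNodes p).head? = some a

/-- The path ends at node `b`. -/
def endsAt (p : List (Step V)) (b : V) : Prop := (pathNodes p).getLast? = some b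

/-- The non-endpoint (interior) nodes of the path. -/
def interiorNodes (p : List (Step V)) : List V := ((pathNodes p).drop 1).dropLast

/-- Consecutive pairs of steps of a path. -/
def stepPairs (p : List (Step V)) : List (Step V × Step V) := p.zip p.tail

/-- Does an edge of this kind have an arrowhead at the destination of its step? -/
def headAtDst : EdgeKind → Prop
  | EdgeKind.fwd => True | EdgeKind.bwd => False
  | EdgeKind.und => False | EdgeKind.bid => True

/-- Does an edge of this kind have an arrowhead at the source of its step? -/
def headAtSrc : EdgeKind → Prop
  | EdgeKind.fwd => False | EdgeKind.bwd => True
  | EdgeKind.und => False | EdgeKind.bid => True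

/-- `v` is a collider on the path `p`: both adjacent edges have an arrowhead at `v`. -/
def colliderAt (p : List (Step V)) (v : V) : Prop :=
  ∃ q ∈ stepPairs p, Step.dst q.1 = v ∧ headAtDst (Step.kind q.1) ∧ headAtSrc (Step.kind q.2)

/-- `v` is a non-endpoint non-collider on the path `p`. -/
def nonColliderAt (p : List (Step V)) (v : V) : Prop :=
  v ∈ interiorNodes p ∧ ¬ colliderAt p v

/-- Two nodes are adjacent if they are joined by some edge. -/
def adjacent (G : MixedGraph V) (a b : V) : Prop :=
  G.dir a b ∨ G.dir b a ∨ G.undir a b ∨ G.undir b a ∨ G.bidir a b ∨ G.bidir b a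

/-- `v` is a definite non-collider on `p`: at least one adjacent edge is directed
out of `v`, or both adjacent edges are undirected and the neighbours of `v` on `p`
are non-adjacent. -/
def defNonColliderAt (G : MixedGraph V) (p : List (Step V)) (v : V) : Prop :=
  ∃ q ∈ stepPairs p, Step.dst q.1 = v ∧
    (Step.kind q.1 = EdgeKind.bwd ∨ Step.kind q.2 = EdgeKind.fwd ∨
      (Step.kind q.1 = EdgeKind.und ∧ Step.kind q.2 = EdgeKind.und ∧
        ¬ adjacent G (Step.src q.1) (Step.dst q.2)))

/-- Every non-endpoint node of `p` is a collider or a definite non-collider. -/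
def definiteStatus (G : MixedGraph V) (p : List (Step V)) : Prop :=
  ∀ q ∈ stepPairs p,
    (headAtDst (Step.kind q.1) ∧ headAtSrc (Step.kind q.2)) ∨
    (Step.kind q.1 = EdgeKind.bwd ∨ Step.kind q.2 = EdgeKind.fwd ∨
      (Step.kind q.1 = EdgeKind.und ∧ Step.kind q.2 = EdgeKind.und ∧
        ¬ adjacent G (Step.src q.1) (Step.dst q.2)))

/-- All steps of the path traverse directed edges forwards (a causal/directed path). -/
def allFwd (p : List (Step V)) : Prop := ∀ s ∈ p, Step.kind s = EdgeKind.fwd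

/-- `p` is a directed (causal) path in `G` from `a` to `b`. -/
def directedPathFromTo (G : MixedGraph V) (p : List (Step V)) (a b : V) : Prop :=
  IsPath G p ∧ allFwd p ∧ startsAt p a ∧ endsAt p b

/-- `p` is possibly directed: every edge is undirected or traversed forwards, and
there are no indices `i < j` with a directed edge from the `j`-th to the `i`-th node. -/
def possiblyDirected (G : MixedGraph V) (p : List (Step V)) : Prop :=
  (∀ s ∈ p, Step.kind s = EdgeKind.fwd ∨ Step.kind s = EdgeKind.und) ∧
  (pathNodes p).Pairwise (fun a b => ¬ G.dir b a)

/-- `b` is a descendant of `a`: `b = a` or a directed path from `a` to `b` exists. -/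
def descendant (G : MixedGraph V) (a b : V) : Prop :=
  a = b ∨ ∃ p, directedPathFromTo G p a b

/-- The descendants of a node set. -/
def deSet (G : MixedGraph V) (A : Set V) : Set V := {b | ∃ a ∈ A, descendant G a b}

/-- `b` is a possible descendant of `a`. -/
def possDescendant (G : MixedGraph V) (a b : V) : Prop :=
  a = b ∨ ∃ p, IsPath G p ∧ possiblyDirected G p ∧ startsAt p a ∧ endsAt p b

/-- The possible descendants of a node set. -/
def possdeSet (G : MixedGraph V) (A : Set V) : Set V := {b | ∃ a ∈ A, possDescendant G a b}

/-- `p` is a proper path from `X` to `Y`: only its first node lies in `X`. -/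
def properFromTo (G : MixedGraph V) (p : List (Step V)) (X Y : Set V) : Prop :=
  IsPath G p ∧ (∃ a ∈ X, startsAt p a) ∧ (∃ b ∈ Y, endsAt p b) ∧
    ∀ v ∈ (pathNodes p).tail, v ∉ X

/-- The causal nodes: nodes on proper directed paths from `X` to `Y`, excluding `X`. -/
def cn (G : MixedGraph V) (X Y : Set V) : Set V :=
  {v | v ∉ X ∧ ∃ p, properFromTo G p X Y ∧ allFwd p ∧ v ∈ pathNodes p}

/-- The possibly causal nodes: nodes on proper possibly directed paths from `X` to `Y`,
excluding `X`. -/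
def posscn (G : MixedGraph V) (X Y : Set V) : Set V :=
  {v | v ∉ X ∧ ∃ p, properFromTo G p X Y ∧ possiblyDirected G p ∧ v ∈ pathNodes p}

/-- The forbidden set for DAG-like graphs: `de(cn(X,Y,G),G) ∪ X`. -/
def forbD (G : MixedGraph V) (X Y : Set V) : Set V := deSet G (cn G X Y) ∪ X

/-- The forbidden set for maxPDAGs: `possde(posscn(X,Y,G),G) ∪ X`. -/
def forbP (G : MixedGraph V) (X Y : Set V) : Set V := possdeSet G (posscn G X Y) ∪ X

/-- Parents of a node set (via directed edges). -/
def paSet (G : MixedGraph V) (A : Set V) : Set V := {w | ∃ a ∈ A, G.dir w a}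

/-- The O-set for DAG-like graphs: `pa(cn(X,Y,G),G) \ forb(X,Y,G)`. -/
def OsetD (G : MixedGraph V) (X Y : Set V) : Set V := paSet G (cn G X Y) \ forbD G X Y

/-- The O-set for maxPDAGs: `pa(cn(X,Y,G),G) \ forb(X,Y,G)`. -/
def OsetP (G : MixedGraph V) (X Y : Set V) : Set V := paSet G (cn G X Y) \ forbP G X Y

/-- `v` is an ancestor (via directed paths) of some node of `C`. -/
def ancestorOfSome (G : MixedGraph V) (v : V) (C : Set V) : Prop :=
  ∃ c ∈ C, descendant G v c

/-- The path `p` is blocked by `C`: it contains a non-collider in `C` or a collider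
that is not an ancestor of any node of `C`. -/
def blocked (G : MixedGraph V) (p : List (Step V)) (C : Set V) : Prop :=
  (∃ v ∈ C, nonColliderAt p v) ∨ (∃ v, colliderAt p v ∧ ¬ ancestorOfSome G v C)

/-- The definite-status path `p` is blocked by `C`: it contains a definite non-collider
in `C` or a collider that is not an ancestor of any node of `C`. -/
def blockedDef (G : MixedGraph V) (p : List (Step V)) (C : Set V) : Prop :=
  (∃ v ∈ C, defNonColliderAt G p v) ∨ (∃ v, colliderAt p v ∧ ¬ ancestorOfSome G v C)

/-- Generalised adjustment criterion for DAGs/ADMGs: `Z` is disjoint from `X ∪ Y` and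
from the forbidden set, and every proper non-causal path from `X` to `Y` is blocked. -/
def validAdjDAG (G : MixedGraph V) (X Y Z : Set V) : Prop :=
  Z ∩ (X ∪ Y) = ∅ ∧ Z ∩ forbD G X Y = ∅ ∧
  ∀ p, properFromTo G p X Y → ¬ allFwd p → blocked G p Z

/-- `G` is amenable relative to `(X,Y)`: every proper possibly directed path from `X`
to `Y` starts with a directed edge out of `X`. -/
def amenable (G : MixedGraph V) (X Y : Set V) : Prop :=
  ∀ p, properFromTo G p X Y → possiblyDirected G p →
    ∃ s rest, p = s :: rest ∧ Step.kind s = EdgeKind.fwd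

/-- Generalised adjustment criterion for maxPDAGs: `Z` is disjoint from `X ∪ Y`,
`G` is amenable relative to `(X,Y)`, `Z` avoids the forbidden set, and every proper
non-causal definite-status path from `X` to `Y` is blocked by `Z`. -/
def validAdjMax (G : MixedGraph V) (X Y Z : Set V) : Prop :=
  Z ∩ (X ∪ Y) = ∅ ∧ amenable G X Y ∧ Z ∩ forbP G X Y = ∅ ∧
  ∀ p, properFromTo G p X Y → definiteStatus G p → ¬ possiblyDirected G p →
    blockedDef G p Z

/-- A PDAG: a simple graph with only directed and undirected edges and
no directed cycles. -/
structure IsPDAG (G : MixedGraph V) : Prop where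
  no_bidir : ∀ a b, ¬ G.bidir a b
  undir_symm : ∀ a b, G.undir a b → G.undir b a
  dir_irrefl : ∀ a, ¬ G.dir a a
  undir_irrefl : ∀ a, ¬ G.undir a a
  simple_dd : ∀ a b, G.dir a b → ¬ G.dir b a
  simple_du : ∀ a b, G.dir a b → ¬ G.undir a b
  acyclic : ∀ a b, (∃ p, directedPathFromTo G p a b) → ¬ G.dir b a

/-- A DAG: a PDAG without undirected edges. -/
structure IsDAG (G : MixedGraph V) extends IsPDAG G : Prop where
  no_undir : ∀ a b, ¬ G.undir a b

/-- A maximally oriented PDAG: a PDAG closed under Meek's rules R1–R4. -/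
structure IsMaxPDAG (G : MixedGraph V) extends IsPDAG G : Prop where
  meek1 : ∀ a b c, G.dir a b → G.undir b c → ¬ adjacent G a c → G.dir b c
  meek2 : ∀ a b c, G.dir a b → G.dir b c → G.undir a c → G.dir a c
  meek3 : ∀ a b c d, G.undir a b → G.undir a c → G.undir a d → G.dir b d → G.dir c d →
      ¬ adjacent G b c → G.dir a d
  meek4 : ∀ a b c d, G.undir a b → G.dir a c → G.undir b c → G.dir c d → G.undir b d →
      G.dir b d

/-- The first edge of the path has an arrowhead at the first node. -/
def startsWithArrowIn (p : List (Step V)) : Prop :=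
  ∃ s rest, p = s :: rest ∧ headAtSrc (Step.kind s)

/-- The last edge of the path has an arrowhead at the last node. -/
def endsWithArrowIn (p : List (Step V)) : Prop :=
  ∃ s rest, p = rest ++ [s] ∧ headAtDst (Step.kind s)

/-- Projection of `G` over the node set `F`: the graph on the nodes outside `F` with
(i) a directed edge `a → b` iff `G` has a directed path from `a` to `b` with all
non-endpoint nodes in `F`; (ii) a bi-directed edge `a ↔ b` iff `G` has a path with
at least one non-endpoint node, of the form `a ← ⋯ → b`, on which every non-endpoint
node is a non-collider and lies in `F`; (iii) an undirected edge `a − b` iff `G` has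
the undirected edge `a − b`. -/
def forbProjection (G : MixedGraph V) (F : Set V) : MixedGraph V where
  dir a b := a ∉ F ∧ b ∉ F ∧
    ∃ p, directedPathFromTo G p a b ∧ ∀ v ∈ interiorNodes p, v ∈ F
  bidir a b := a ∉ F ∧ b ∉ F ∧
    ∃ p, IsPath G p ∧ startsAt p a ∧ endsAt p b ∧ interiorNodes p ≠ [] ∧
      startsWithArrowIn p ∧ endsWithArrowIn p ∧
      ∀ v ∈ interiorNodes p, v ∈ F ∧ ¬ colliderAt p v
  undir a b := a ∉ F ∧ b ∉ F ∧ G.undir a b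

/-- The forbidden projection of a DAG `D` with respect to `(X,Y)`:
the latent projection over `forb(X,Y,D) \ (X ∪ Y)`. -/
def dagProj (D : MixedGraph V) (X Y : Set V) : MixedGraph V :=
  forbProjection D (forbD D X Y \ (X ∪ Y))

/-- The forbidden projection of a maxPDAG `G` with respect to `(X,Y)`:
the projection over `forb(X,Y,G) \ (X ∪ Y)`. -/
def maxProj (G : MixedGraph V) (X Y : Set V) : MixedGraph V :=
  forbProjection G (forbP G X Y \ (X ∪ Y))

/-- `A` and `B` are d-separated given `C` in `G`: every path between a node of `A`
and a node of `B` is blocked by `C`. -/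
def dSep (G : MixedGraph V) (A B C : Set V) : Prop :=
  ∀ p a b, a ∈ A → b ∈ B → IsPath G p → startsAt p a → endsAt p b → blocked G p C

/-- A v-structure `a → b ← c` with `a`, `c` non-adjacent. -/
def vStructure (G : MixedGraph V) (a b c : V) : Prop :=
  a ≠ c ∧ G.dir a b ∧ G.dir c b ∧ ¬ adjacent G a c

/-- The DAG `D` is represented by the maxPDAG `G` (i.e. `D ∈ [G]`): `D` is a DAG
with the same adjacencies and v-structures as `G`, and every directed edge of `G`
occurs in `D` with the same orientation. -/
def represents (G D : MixedGraph V) : Prop :=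
  IsDAG D ∧ (∀ a b, adjacent G a b ↔ adjacent D a b) ∧
  (∀ a b c, vStructure G a b c ↔ vStructure D a b c) ∧
  (∀ a b, G.dir a b → D.dir a b)

/-- One step of the pruning procedure: remove from `Z` a node `z` such that `Y` is
d-separated from `z` given `{X} ∪ (Z \ {z})`. -/
def pruneStep (G : MixedGraph V) (X Y : V) (Z Z' : Set V) : Prop :=
  ∃ z ∈ Z, dSep G {Y} {z} ({X} ∪ (Z \ {z})) ∧ Z' = Z \ {z}

/-- `Z'` is a possible result of the pruning procedure started at `Z`: it is reachable
by pruning steps and no further node can be removed. -/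
def pruneResult (G : MixedGraph V) (X Y : V) (Z Z' : Set V) : Prop :=
  Relation.ReflTransGen (pruneStep G X Y) Z Z' ∧
  ∀ z ∈ Z', ¬ dSep G {Y} {z} ({X} ∪ (Z' \ {z}))

end Causal

/-! In an acyclic graph a directed walk is a path, so a walk from `X` to `v` followed by one from
`v` to `Y` witnesses that `v` is causal; leaving `X` for the last time makes it proper. Hence, for
`X` and `Y` disjoint, the causal nodes are the descendants of `X` from which `Y` can be reached
outside `X`. All forbidden nodes are descendants of `X`, so if moreover `Y ⊆ de(X)`, the causal
nodes are also exactly those from which `Y` can be reached through `forb(X,Y) \ (X ∪ Y)`, and the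
parents of such nodes become parents of `Y` in the projection. -/

namespace Causal

open Relation

section Chains

variable {α : Type*} {r : α → α → Prop} {a b v : α} {l : List α}

theorem reflTransGen_of_isChain_cons (h : (a :: l).IsChain r)
    (hb : (a :: l).getLast? = some b) : ReflTransGen r a b :=
  List.relationReflTransGen_of_exists_isChain_cons l h
    (Option.some_injective _ (by rw [← hb, List.getLast?_eq_some_getLast]))

theorem reflTransGen_of_mem_isChain_cons (h : (a :: l).IsChain r)
    (hb : (a :: l).getLast? = some b) (hv : v ∈ a :: l) :
    ReflTransGen r a v ∧ ReflTransGen r v b := by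
  induction l generalizing a with
  | nil =>
    obtain rfl := List.mem_singleton.1 hv
    exact ⟨.refl, reflTransGen_of_isChain_cons h hb⟩
  | cons c l ih =>
    rcases List.mem_cons.1 hv with rfl | hv
    · exact ⟨.refl, reflTransGen_of_isChain_cons h hb⟩
    · obtain ⟨hac, hcl⟩ := List.isChain_cons_cons.1 h
      obtain ⟨hcv, hvb⟩ := ih hcl (by rwa [List.getLast?_cons_cons] at hb) hv
      exact ⟨.head hac hcv, hvb⟩

theorem exists_isChain_cons_mem (hav : ReflTransGen r a v) (hvb : ReflTransGen r v b) :
    ∃ l, (a :: l).IsChain r ∧ (a :: l).getLast? = some b ∧ v ∈ a :: l := by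
  induction hav using ReflTransGen.head_induction_on with
  | refl =>
    obtain ⟨l, hl, hb⟩ := List.exists_isChain_cons_of_relationReflTransGen hvb
    exact ⟨l, hl, by rw [List.getLast?_eq_some_getLast (List.cons_ne_nil _ _), hb],
      List.mem_cons_self⟩
  | @head a c hac _ ih =>
    obtain ⟨l, hl, hb, hv⟩ := ih
    exact ⟨c :: l, List.isChain_cons_cons.2 ⟨hac, hl⟩, by rwa [List.getLast?_cons_cons],
      List.mem_cons_of_mem _ hv⟩

theorem exists_nodup_isChain_cons (h : ReflTransGen r a b) :
    ∃ l, (a :: l).IsChain r ∧ (a :: l).Nodup ∧ (a :: l).getLast? = some b := by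
  induction h using ReflTransGen.head_induction_on with
  | refl => exact ⟨[], .singleton _, List.nodup_singleton _, rfl⟩
  | @head a c hac _ ih =>
    obtain ⟨l, hl, hnodup, hb⟩ := ih
    by_cases ha : a ∈ c :: l
    · obtain ⟨s, t, hst⟩ := List.append_of_mem ha
      rw [hst] at hl hnodup hb
      exact ⟨t, hl.right_of_append, hnodup.of_append_right, by
        rwa [List.getLast?_append_of_ne_nil _ (List.cons_ne_nil a t)] at hb⟩
    · exact ⟨c :: l, List.isChain_cons_cons.2 ⟨hac, hl⟩, List.nodup_cons.2 ⟨ha, hnodup⟩, by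
        rwa [List.getLast?_cons_cons]⟩

theorem nodup_of_isChain (hr : ∀ a, ¬ TransGen r a a) (h : l.IsChain r) : l.Nodup := by
  refine (h.imp fun _ _ => TransGen.single).pairwise.imp ?_
  rintro a _ haa rfl
  exact hr a haa

end Chains

section DirectedPaths

variable {V : Type*} {G : MixedGraph V}

/-- The step list of the directed path visiting `a` and then the nodes of the list, in order. -/
def fwdSteps : V → List V → List (Step V)
  | _, [] => []
  | a, b :: l => (a, EdgeKind.fwd, b) :: fwdSteps b l

theorem map_dst_fwdSteps (a : V) (l : List V) : (fwdSteps a l).map Step.dst = l := by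
  induction l generalizing a with
  | nil => rfl
  | cons b l ih => exact congrArg (b :: ·) (ih b)

theorem pathNodes_fwdSteps (a : V) {l : List V} (hl : l ≠ []) :
    pathNodes (fwdSteps a l) = a :: l := by
  obtain ⟨b, l, rfl⟩ := List.exists_cons_of_ne_nil hl
  exact congrArg (a :: ·) (map_dst_fwdSteps a (b :: l))

theorem allFwd_fwdSteps (a : V) (l : List V) : allFwd (fwdSteps a l) := by
  induction l generalizing a with
  | nil => exact List.forall_mem_nil _
  | cons b l ih => exact List.forall_mem_cons.2 ⟨rfl, ih b⟩

theorem stepOK_of_mem_fwdSteps {a : V} {l : List V} (h : (a :: l).IsChain G.dir) :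
    ∀ s ∈ fwdSteps a l, stepOK G s := by
  induction l generalizing a with
  | nil => exact List.forall_mem_nil _
  | cons b l ih =>
    obtain ⟨hab, hl⟩ := List.isChain_cons_cons.1 h
    exact List.forall_mem_cons.2 ⟨hab, ih hl⟩

theorem isChain_fwdSteps (a : V) (l : List V) :
    (fwdSteps a l).IsChain fun s t => Step.dst s = Step.src t := by
  induction l generalizing a with
  | nil => exact .nil
  | cons b l ih =>
    cases l with
    | nil => exact .singleton _
    | cons c l => exact List.isChain_cons_cons.2 ⟨rfl, ih b⟩

theorem isPath_fwdSteps {a : V} {l : List V} (hl : l ≠ []) (hchain : (a :: l).IsChain G.dir)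
    (hnodup : (a :: l).Nodup) : IsPath G (fwdSteps a l) where
  nonempty h := hl (by rw [← map_dst_fwdSteps a l, h, List.map_nil])
  valid := stepOK_of_mem_fwdSteps hchain
  chain := isChain_fwdSteps a l
  nodup := by rwa [pathNodes_fwdSteps a hl]

theorem isChain_dir_pathNodes {p : List (Step V)} (hvalid : ∀ s ∈ p, stepOK G s)
    (hchain : p.IsChain fun s t => Step.dst s = Step.src t) (hfwd : allFwd p) :
    (pathNodes p).IsChain G.dir := by
  induction p with
  | nil => exact .nil
  | cons s p ih =>
    obtain ⟨hs, hp⟩ := List.forall_mem_cons.1 hvalid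
    obtain ⟨hsfwd, hpfwd⟩ := List.forall_mem_cons.1 hfwd
    have hdir : G.dir (Step.src s) (Step.dst s) := by rwa [stepOK, hsfwd] at hs
    cases p with
    | nil => exact List.isChain_pair.2 hdir
    | cons t p =>
      obtain ⟨hst, htp⟩ := List.isChain_cons_cons.1 hchain
      refine List.isChain_cons_cons.2 ⟨hdir, ?_⟩
      rw [hst]
      exact ih hp htp hpfwd

theorem exists_isPath_allFwd_iff {Q : List V → Prop} :
    (∃ p, IsPath G p ∧ allFwd p ∧ Q (pathNodes p)) ↔
      ∃ a l, l ≠ [] ∧ (a :: l).IsChain G.dir ∧ (a :: l).Nodup ∧ Q (a :: l) := by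
  constructor
  · rintro ⟨p, hp, hfwd, hQ⟩
    obtain ⟨s, p, rfl⟩ := List.exists_cons_of_ne_nil hp.nonempty
    exact ⟨Step.src s, (s :: p).map Step.dst, List.cons_ne_nil _ _,
      isChain_dir_pathNodes hp.valid hp.chain hfwd, hp.nodup, hQ⟩
  · rintro ⟨a, l, hl, hchain, hnodup, hQ⟩
    exact ⟨fwdSteps a l, isPath_fwdSteps hl hchain hnodup, allFwd_fwdSteps a l, by
      rwa [pathNodes_fwdSteps a hl]⟩

theorem exists_directedPathFromTo_iff {a b : V} {Q : List V → Prop} :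
    (∃ p, directedPathFromTo G p a b ∧ Q (pathNodes p)) ↔
      ∃ l, l ≠ [] ∧ (a :: l).IsChain G.dir ∧ (a :: l).Nodup ∧
        (a :: l).getLast? = some b ∧ Q (a :: l) := by
  have key := exists_isPath_allFwd_iff (G := G)
    (Q := fun l => l.head? = some a ∧ l.getLast? = some b ∧ Q l)
  simp only [directedPathFromTo, startsAt, endsAt, and_assoc]
  refine key.trans ⟨?_, ?_⟩
  · rintro ⟨a', l, hl, hchain, hnodup, ha, hb, hQ⟩
    obtain rfl : a' = a := Option.some_injective _ ha
    exact ⟨l, hl, hchain, hnodup, hb, hQ⟩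
  · rintro ⟨l, hl, hchain, hnodup, hb, hQ⟩
    exact ⟨a, l, hl, hchain, hnodup, rfl, hb, hQ⟩

theorem descendant_iff_reflTransGen {a b : V} : descendant G a b ↔ ReflTransGen G.dir a b := by
  have hpath := exists_directedPathFromTo_iff (G := G) (a := a) (b := b) (Q := fun _ => True)
  simp only [and_true] at hpath
  rw [descendant, hpath]
  constructor
  · rintro (rfl | ⟨l, -, hchain, -, hb⟩)
    · exact .refl
    · exact reflTransGen_of_isChain_cons hchain hb
  · intro h
    obtain ⟨l, hchain, hnodup, hb⟩ := exists_nodup_isChain_cons h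
    rcases eq_or_ne l [] with rfl | hl
    · exact .inl (Option.some_injective _ hb)
    · exact .inr ⟨l, hl, hchain, hnodup, hb⟩

theorem subset_deSet (A : Set V) : A ⊆ deSet G A := fun a ha => ⟨a, ha, .inl rfl⟩

theorem deSet_subset_deSet_of_subset_deSet {A B : Set V} (h : A ⊆ deSet G B) :
    deSet G A ⊆ deSet G B := by
  rintro v ⟨a, ha, hav⟩
  obtain ⟨b, hb, hba⟩ := h ha
  simp only [descendant_iff_reflTransGen] at hav hba
  exact ⟨b, hb, descendant_iff_reflTransGen.2 (hba.trans hav)⟩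

theorem mem_deSet_of_dir {A : Set V} {a b : V} (ha : a ∈ deSet G A) (hab : G.dir a b) :
    b ∈ deSet G A :=
  deSet_subset_deSet_of_subset_deSet (Set.singleton_subset_iff.2 ha)
    ⟨a, rfl, descendant_iff_reflTransGen.2 (.single hab)⟩

end DirectedPaths

section Acyclic

variable {V : Type*} {G : MixedGraph V}

/-- `G` has no directed cycle. This is the part of `IsDAG` that matters for O-sets: undirected and
bi-directed edges are unrestricted. -/
def DirAcyclic (G : MixedGraph V) : Prop := ∀ v, ¬ TransGen G.dir v v

theorem IsPDAG.dirAcyclic (hG : IsPDAG G) : DirAcyclic G := by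
  intro v hv
  obtain ⟨w, hvw, hwv⟩ := TransGen.tail'_iff.1 hv
  rcases descendant_iff_reflTransGen.2 hvw with rfl | hpath
  · exact hG.dir_irrefl v hwv
  · exact hG.acyclic v w hpath hwv

end Acyclic

section AncestorsThrough

variable {V : Type*} {G : MixedGraph V} {F F' Y : Set V}

/-- The directed edges of `G` whose tail lies in `F`. A walk along them has all its nodes in `F`
except possibly the last one. -/
def dirOutOf (G : MixedGraph V) (F : Set V) (a b : V) : Prop := a ∈ F ∧ G.dir a b

theorem isChain_dirOutOf_iff {l : List V} :
    l.IsChain (dirOutOf G F) ↔ l.IsChain G.dir ∧ ∀ v ∈ l.dropLast, v ∈ F := by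
  induction l using List.twoStepInduction with
  | nil | singleton => simp
  | cons_cons a b l _ ih =>
    simp only [List.isChain_cons_cons, ih, dirOutOf, List.dropLast_cons_cons, List.forall_mem_cons]
    tauto

/-- The nodes from which `Y` can be reached along a directed walk whose nodes before the last one
all lie in `F`. With `F` the nodes projected out, their parents become parents of `Y`; with `F`
the complement of `X`, and `Y` disjoint from `X`, the walk avoids `X`. -/
def ancestorsThrough (G : MixedGraph V) (F Y : Set V) : Set V :=
  {v | ∃ y ∈ Y, ReflTransGen (dirOutOf G F) v y}

theorem subset_ancestorsThrough : Y ⊆ ancestorsThrough G F Y := fun y hy => ⟨y, hy, .refl⟩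

theorem ancestorsThrough_mono (h : F ⊆ F') : ancestorsThrough G F Y ⊆ ancestorsThrough G F' Y :=
  fun _ ⟨y, hy, hvy⟩ => ⟨y, hy, ReflTransGen.mono (fun _ _ hab => ⟨h hab.1, hab.2⟩) _ _ hvy⟩

theorem ancestorsThrough_subset_union : ancestorsThrough G F Y ⊆ F ∪ Y := by
  rintro v ⟨y, hy, hvy⟩
  rcases hvy.cases_head with rfl | ⟨_, hv, _⟩
  · exact .inr hy
  · exact .inl hv.1

theorem paSet_forbProjection_diff (hFY : Disjoint F Y) :
    paSet (forbProjection G F) Y \ Y = paSet G (ancestorsThrough G F Y) \ (F ∪ Y) := by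
  ext w
  constructor
  · rintro ⟨⟨y, hy, hwF, -, hpath⟩, hwY⟩
    obtain ⟨l, hl, hchain, -, hlast, hF⟩ :=
      (exists_directedPathFromTo_iff (Q := fun l => ∀ v ∈ (l.drop 1).dropLast, v ∈ F)).1 hpath
    obtain ⟨c, l, rfl⟩ := List.exists_cons_of_ne_nil hl
    obtain ⟨hwc, hcl⟩ := List.isChain_cons_cons.1 hchain
    rw [List.getLast?_cons_cons] at hlast
    have hcy : ReflTransGen (dirOutOf G F) c y :=
      reflTransGen_of_isChain_cons (isChain_dirOutOf_iff.2 ⟨hcl, hF⟩) hlast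
    exact ⟨⟨c, ⟨y, hy, hcy⟩, hwc⟩, fun h => h.elim hwF hwY⟩
  · rintro ⟨⟨c, ⟨y, hy, hcy⟩, hwc⟩, hw⟩
    obtain ⟨hwF, hwY⟩ := not_or.1 hw
    obtain ⟨l, hchain, hnodup, hlast⟩ := exists_nodup_isChain_cons hcy
    have hwl : w ∉ c :: l := fun hmem =>
      (ancestorsThrough_subset_union
        ⟨y, hy, (reflTransGen_of_mem_isChain_cons hchain hlast hmem).2⟩).elim hwF hwY
    obtain ⟨hdir, hF⟩ := isChain_dirOutOf_iff.1 hchain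
    exact ⟨⟨y, hy, hwF, Set.disjoint_right.1 hFY hy,
      (exists_directedPathFromTo_iff (Q := fun l => ∀ v ∈ (l.drop 1).dropLast, v ∈ F)).2
        ⟨c :: l, List.cons_ne_nil c l, List.isChain_cons_cons.2 ⟨hwc, hdir⟩,
          List.nodup_cons.2 ⟨hwl, hnodup⟩, by rwa [List.getLast?_cons_cons], hF⟩⟩, hwY⟩

end AncestorsThrough

section CausalNodes

variable {V : Type*} {G : MixedGraph V} {X Y : Set V} {v : V}

theorem mem_cn_iff :
    v ∈ cn G X Y ↔ ∃ x ∈ X, ∃ l, (x :: l).IsChain G.dir ∧ (x :: l).Nodup ∧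
      (∃ y ∈ Y, (x :: l).getLast? = some y) ∧ (∀ u ∈ l, u ∉ X) ∧ v ∈ l := by
  have key := exists_isPath_allFwd_iff (G := G) (Q := fun l => (∃ x ∈ X, l.head? = some x) ∧
    (∃ y ∈ Y, l.getLast? = some y) ∧ (∀ u ∈ l.tail, u ∉ X) ∧ v ∈ l)
  constructor
  · rintro ⟨hvX, p, ⟨hp, hstart, hend, hproper⟩, hfwd, hv⟩
    obtain ⟨a, l, -, hchain, hnodup, ⟨x, hx, hax⟩, hlast, hlX, hv⟩ :=
      key.1 ⟨p, hp, hfwd, hstart, hend, hproper, hv⟩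
    obtain rfl : a = x := Option.some_injective _ hax
    exact ⟨a, hx, l, hchain, hnodup, hlast, hlX,
      List.mem_of_ne_of_mem (fun hva => hvX (hva ▸ hx)) hv⟩
  · rintro ⟨x, hx, l, hchain, hnodup, hlast, hlX, hv⟩
    obtain ⟨p, hp, hfwd, hstart, hend, hproper, hvp⟩ := key.2 ⟨x, l, List.ne_nil_of_mem hv, hchain,
      hnodup, ⟨x, hx, rfl⟩, hlast, hlX, List.mem_cons_of_mem x hv⟩
    exact ⟨hlX v hv, p, ⟨hp, hstart, hend, hproper⟩, hfwd, hvp⟩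

theorem cn_subset_deSet : cn G X Y ⊆ deSet G X := by
  intro v hv
  obtain ⟨x, hx, l, hchain, -, ⟨y, -, hlast⟩, -, hvl⟩ := mem_cn_iff.1 hv
  exact ⟨x, hx, descendant_iff_reflTransGen.2
    (reflTransGen_of_mem_isChain_cons hchain hlast (List.mem_cons_of_mem x hvl)).1⟩

theorem cn_subset_ancestorsThrough_compl : cn G X Y ⊆ ancestorsThrough G Xᶜ Y := by
  intro v hv
  obtain ⟨x, -, l, hchain, -, ⟨y, hy, hlast⟩, hlX, hvl⟩ := mem_cn_iff.1 hv
  obtain ⟨c, l, rfl⟩ := List.exists_cons_of_ne_nil (List.ne_nil_of_mem hvl)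
  rw [List.getLast?_cons_cons] at hlast
  have hchainX : (c :: l).IsChain (dirOutOf G Xᶜ) :=
    isChain_dirOutOf_iff.2 ⟨hchain.tail, fun u hu => hlX u (List.mem_of_mem_dropLast hu)⟩
  exact ⟨y, hy, (reflTransGen_of_mem_isChain_cons hchainX hlast hvl).2⟩

-- `x` is the last node in `X` on a directed walk from `X` to `v`.
theorem exists_dir_reflTransGen_of_mem_deSet (hv : v ∈ deSet G X) (hvX : v ∉ X) :
    ∃ x ∈ X, ∃ c, G.dir x c ∧ ReflTransGen (dirOutOf G Xᶜ) c v := by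
  obtain ⟨x, hx, hxv⟩ := hv
  induction descendant_iff_reflTransGen.1 hxv with
  | refl => exact absurd hx hvX
  | @tail b v hxb hbv ih =>
    by_cases hbX : b ∈ X
    · exact ⟨b, hbX, v, hbv, .refl⟩
    · obtain ⟨x', hx', c, hc, hcb⟩ := ih hbX (descendant_iff_reflTransGen.2 hxb)
      exact ⟨x', hx', c, hc, hcb.tail ⟨hbX, hbv⟩⟩

theorem cn_eq_deSet_inter_ancestorsThrough (hG : DirAcyclic G) (hXY : Disjoint X Y) :
    cn G X Y = deSet G X ∩ ancestorsThrough G Xᶜ Y := by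
  refine (Set.subset_inter cn_subset_deSet cn_subset_ancestorsThrough_compl).antisymm ?_
  have hcompl : ancestorsThrough G Xᶜ Y ⊆ Xᶜ :=
    ancestorsThrough_subset_union.trans (Set.union_subset le_rfl hXY.subset_compl_left)
  rintro v ⟨hvde, y, hy, hvy⟩
  obtain ⟨x, hx, c, hxc, hcv⟩ :=
    exists_dir_reflTransGen_of_mem_deSet hvde (hcompl ⟨y, hy, hvy⟩)
  obtain ⟨l, hchain, hlast, hvl⟩ := exists_isChain_cons_mem hcv hvy
  have hdir : (x :: c :: l).IsChain G.dir :=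
    List.isChain_cons_cons.2 ⟨hxc, (isChain_dirOutOf_iff.1 hchain).1⟩
  have hlX : ∀ u ∈ c :: l, u ∉ X := fun u hu =>
    hcompl ⟨y, hy, (reflTransGen_of_mem_isChain_cons hchain hlast hu).2⟩
  exact mem_cn_iff.2 ⟨x, hx, c :: l, hdir, nodup_of_isChain hG hdir,
    ⟨y, hy, by rwa [List.getLast?_cons_cons]⟩, hlX, hvl⟩

theorem cn_subset_forbD : cn G X Y ⊆ forbD G X Y :=
  (subset_deSet _).trans Set.subset_union_left

theorem forbD_subset_deSet : forbD G X Y ⊆ deSet G X :=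
  Set.union_subset (deSet_subset_deSet_of_subset_deSet cn_subset_deSet) (subset_deSet X)

theorem subset_cn (hG : DirAcyclic G) (hXY : Disjoint X Y) (hYX : Y ⊆ deSet G X) :
    Y ⊆ cn G X Y := by
  rw [cn_eq_deSet_inter_ancestorsThrough hG hXY]
  exact Set.subset_inter hYX subset_ancestorsThrough

theorem cn_subset_ancestorsThrough_forbD (hG : DirAcyclic G) (hXY : Disjoint X Y) :
    cn G X Y ⊆ ancestorsThrough G (forbD G X Y \ (X ∪ Y)) Y := by
  intro v hv
  have hcn := cn_eq_deSet_inter_ancestorsThrough hG hXY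
  obtain ⟨hvde, y, hy, hvy⟩ := hcn.subset hv
  induction hvy using ReflTransGen.head_induction_on with
  | refl => exact subset_ancestorsThrough hy
  | @head v c hvc hcy ih =>
    by_cases hvY : v ∈ Y
    · exact subset_ancestorsThrough hvY
    · have hcde := mem_deSet_of_dir hvde hvc.2
      obtain ⟨y', hy', hcy'⟩ := ih (hcn.superset ⟨hcde, y, hy, hcy⟩) hcde
      exact ⟨y', hy', .head ⟨⟨cn_subset_forbD hv, fun h => h.elim hvc.1 hvY⟩, hvc.2⟩ hcy'⟩

theorem cn_eq_ancestorsThrough_forbD (hG : DirAcyclic G) (hXY : Disjoint X Y)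
    (hYX : Y ⊆ deSet G X) :
    cn G X Y = ancestorsThrough G (forbD G X Y \ (X ∪ Y)) Y := by
  refine (cn_subset_ancestorsThrough_forbD hG hXY).antisymm ?_
  rw [cn_eq_deSet_inter_ancestorsThrough hG hXY]
  refine Set.subset_inter ?_ (ancestorsThrough_mono fun u hu huX => hu.2 (.inl huX))
  exact ancestorsThrough_subset_union.trans
    (Set.union_subset (Set.sdiff_subset.trans forbD_subset_deSet) hYX)

end CausalNodes

end Causal

open Causal in
theorem O_set_eq_parents_of_Y_in_forbidden_projection_general
    {V : Type*} {G : MixedGraph V} {X Y : Set V}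
    (hG : DirAcyclic G) (hXY : Disjoint X Y) (hYX : Y ⊆ deSet G X) :
    OsetD G X Y = paSet (dagProj G X Y) Y \ (X ∪ Y) := by
  set F := forbD G X Y \ (X ∪ Y)
  have hforb : F ∪ (X ∪ Y) = forbD G X Y :=
    Set.sdiff_union_of_subset
      (Set.union_subset Set.subset_union_right ((subset_cn hG hXY hYX).trans cn_subset_forbD))
  have hFY : Disjoint F Y := Set.disjoint_sdiff_left.mono_right Set.subset_union_right
  calc OsetD G X Y
      = paSet G (ancestorsThrough G F Y) \ (F ∪ (X ∪ Y)) := by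
        rw [OsetD, hforb, ← cn_eq_ancestorsThrough_forbD hG hXY hYX]
    _ = (paSet G (ancestorsThrough G F Y) \ (F ∪ Y)) \ X := by
        rw [Set.sdiff_sdiff, Set.union_assoc, Set.union_comm Y X]
    _ = (paSet (dagProj G X Y) Y \ Y) \ X := by
        rw [← paSet_forbProjection_diff hFY, dagProj]
    _ = paSet (dagProj G X Y) Y \ (X ∪ Y) := by
        rw [Set.sdiff_sdiff, Set.union_comm Y X]

open Causal in
/-- For disjoint node sets `X`, `Y` of a DAG `D` with `Y ⊆ de(X,D)`,
the O-set `pa(cn(X,Y,D),D) \ forb(X,Y,D)` equals the set of parents of `Y` in the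
forbidden projection `D^{XY}`, excluding the nodes of `X` and `Y`. -/
theorem O_set_eq_parents_of_Y_in_forbidden_projection
    {V : Type*} [Fintype V] (D : MixedGraph V) (X Y : Set V)
    (hD : IsDAG D) (hdisj : Disjoint X Y) (hde : Y ⊆ deSet D X) :
    OsetD D X Y = paSet (dagProj D X Y) Y \ (X ∪ Y) :=
  O_set_eq_parents_of_Y_in_forbidden_projection_general hD.toIsPDAG.dirAcyclic hdisj hde
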